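/- Let f : ℝ → ℝ be twice continuously differentiable with f'(0) ≥ 0 and f'' Lipschitz continuous. Let ū : [0,∞) → ℝ be absolutely continuous with ū(0) = 0 and ū' ∈ L², and let μ̄ be a finite nonnegative Borel measure on [0,∞) whose absolutely continuous part has density ū'(x)². For i = 1,2 let uⁱ : [0,∞)×[0,∞) → ℝ and t ↦ μⁱ_{(t)} (finite nonnegative Borel measures on [0,∞)) satisfy: (a) uⁱ is locally Hölder continuous, uⁱ(0,·) = ū, uⁱ(t,0) = 0, each uⁱ(t,·) is absolutely continuous with square-integrable derivative uⁱ_x(t,·), and for every t ≥ 0 and almost every x ≥ 0, uⁱ(t,x) = ū(x) + ∫₀^t [ −f'(uⁱ)uⁱ_x + (1/2)∫₀^x f''(uⁱ)·(uⁱ_x)² dy ](s,x) ds; (b) μⁱ_{(0)} = μ̄, the absolutely continuous part of μⁱ_{(t)} has density uⁱ_x(t,x)², and for all 0 ≤ t₁ < t₂ and every continuously differentiable compactly supported φ : [0,∞)×[0,∞) → ℝ, ∫φ(t₂,·)dμⁱ_{(t₂)} − ∫φ(t₁,·)dμⁱ_{(t₁)} = ∫_{t₁}^{t₂} ∫ [φ_t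 + φ_x·f'(uⁱ(t,·))] dμⁱ_{(t)} dt; (c) defining yⁱ(t,ξ) = inf{ x ≥ 0 : μⁱ_{(t)}([0,x]) ≥ ξ } and Uⁱ(t,ξ) = uⁱ(t, yⁱ(t,ξ)), for almost every ξ the map t ↦ Uⁱ(t,ξ) is absolutely continuous and satisfies ∂_t Uⁱ(t,ξ) = (1/2)∫₀^ξ f''(Uⁱ(t,η)) dη for almost every t. Then u¹(t,x) = u²(t,x) for all (t,x) and μ¹_{(t)} = μ²_{(t)} for all t ≥ 0. -/

import Mathlib

open MeasureTheory Set Real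

/-- The quantile ("energy-characteristic") function
`y(t,ξ) = inf { x ≥ 0 : μ_{(t)}([0,x]) ≥ ξ }` associated with a family of
measures `μ_{(t)}`. -/
noncomputable def quantile (μ : ℝ → Measure ℝ) (t ξ : ℝ) : ℝ :=
  sInf {x : ℝ | 0 ≤ x ∧ ENNReal.ofReal ξ ≤ μ t (Set.Icc 0 x)}

/-- `ConsSol f ubar μbar u ux μ` says that `(u, μ)` (with `ux` the spatial
derivative of `u`) is a conservative solution of the initial-boundary value
problem for `u_t + f(u)_x = (1/2)∫₀^x f''(u)u_x² dy` on the quarter plane with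
data `(ū, μ̄)`, satisfying conditions (a), (b), (c) of the uniqueness theorem:

(a) `u` is locally Hölder continuous, takes the initial and boundary data, is
absolutely continuous in `x` with square-integrable derivative `ux`, and
satisfies the integrated equation;

(b) `μ_{(0)} = μ̄`, each `μ_{(t)}` is a finite measure on `[0,∞)` whose
absolutely continuous part has density `ux(t,·)²`, and `t ↦ μ_{(t)}` is a
measure-valued solution of the transport equation `w_t + (f'(u)w)_x = 0`;

(c) for a.e. `ξ`, along the energy-quantile characteristics the values
`U(t,ξ) = u(t, y(t,ξ))` satisfy `∂_t U(t,ξ) = (1/2)∫₀^ξ f''(U(t,η)) dη`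
(encoded in integrated form). -/
def ConsSol (f ubar : ℝ → ℝ) (μbar : Measure ℝ)
    (u ux : ℝ → ℝ → ℝ) (μ : ℝ → Measure ℝ) : Prop :=
  -- (a)
  (∀ S : Set (ℝ × ℝ), Bornology.IsBounded S → ∃ C α : ℝ, 0 < C ∧ 0 < α ∧ α ≤ 1 ∧
    ∀ t x s y : ℝ, (t, x) ∈ S → (s, y) ∈ S → 0 ≤ t → 0 ≤ x → 0 ≤ s → 0 ≤ y →
      |u t x - u s y| ≤ C * (|t - s| + |x - y|) ^ α) ∧
  (∀ x : ℝ, 0 ≤ x → u 0 x = ubar x) ∧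
  (∀ t : ℝ, 0 ≤ t → u t 0 = 0) ∧
  (∀ t : ℝ, 0 ≤ t →
    (∀ x : ℝ, 0 ≤ x → IntervalIntegrable (ux t) volume 0 x ∧
      u t x = ∫ y in (0:ℝ)..x, ux t y) ∧
    IntegrableOn (fun x => (ux t x) ^ 2) (Set.Ici 0)) ∧
  (∀ t : ℝ, 0 ≤ t → ∀ᵐ x ∂(volume.restrict (Set.Ici 0)),
    u t x = ubar x + ∫ s in (0:ℝ)..t,
      (-(deriv f (u s x)) * ux s x +
        (1 / 2) * ∫ y in (0:ℝ)..x, deriv (deriv f) (u s y) * (ux s y) ^ 2)) ∧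
  -- (b)
  μ 0 = μbar ∧
  (∀ t : ℝ, 0 ≤ t → μ t Set.univ < ⊤ ∧ μ t (Set.Iio 0) = 0 ∧
    (∀ᵐ x ∂(volume.restrict (Set.Ici 0)),
      (μ t).rnDeriv volume x = ENNReal.ofReal ((ux t x) ^ 2))) ∧
  (∀ t₁ t₂ : ℝ, 0 ≤ t₁ → t₁ < t₂ → ∀ φ : ℝ → ℝ → ℝ,
    ContDiff ℝ 1 (Function.uncurry φ) → HasCompactSupport (Function.uncurry φ) →
    (∫ x, φ t₂ x ∂(μ t₂)) - (∫ x, φ t₁ x ∂(μ t₁)) =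
      ∫ t in t₁..t₂, ∫ x,
        (deriv (fun s => φ s x) t + deriv (fun y => φ t y) x * deriv f (u t x))
          ∂(μ t)) ∧
  -- (c)
  (∀ᵐ ξ ∂(volume.restrict (Set.Icc 0 (μbar Set.univ).toReal)),
    ∀ t : ℝ, 0 ≤ t →
      u t (quantile μ t ξ) = u 0 (quantile μ 0 ξ) +
        ∫ s in (0:ℝ)..t,
          (1 / 2) * ∫ η in (0:ℝ)..ξ, deriv (deriv f) (u s (quantile μ s η)))

/-!
Testing the weak transport equation against smooth cutoffs that move slightly faster or slower than
the speed at the `ξ`-quantile of `μ t` shows that this quantile is itself a characteristic. Since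
`u_x² dx ≤ μ t` gives `u² ≤ q ξ` at the quantile `q`, the speed there grows at most linearly in `q`,
so quantiles exist for all times and the total mass is conserved. In the energy variable `ξ` the two
solutions then satisfy the same integral equation, and Grönwall's inequality identifies their values
along quantiles. Hence the speeds of the quantiles agree, so do the quantiles, and so do the
measures. Finally `u₁ - u₂` vanishes on quantiles, and an arbitrary point is separated from one by
arbitrarily little energy, which bounds the variation of both solutions in between.
-/

open Filter Topology

section Preliminaries

theorem deriv_smoothTransition_eq_zero {z : ℝ} (hz : z ∉ Icc 0 1) :
    deriv smoothTransition z = 0 := by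
  rcases not_and_or.1 hz with hz | hz
  · have : smoothTransition =ᶠ[𝓝 z] fun _ => 0 := by
      filter_upwards [Iio_mem_nhds (not_le.1 hz)] with w hw
      exact smoothTransition.zero_of_nonpos (le_of_lt hw)
    rw [this.deriv_eq, deriv_const]
  · have : smoothTransition =ᶠ[𝓝 z] fun _ => 1 := by
      filter_upwards [Ioi_mem_nhds (not_le.1 hz)] with w hw
      exact smoothTransition.one_of_one_le (le_of_lt hw)
    rw [this.deriv_eq, deriv_const]

section SmoothCutoff

variable (m : Measure ℝ) [IsFiniteMeasure m] (z : ℝ) {η : ℝ}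

theorem integrable_smoothTransition_cutoff :
    Integrable (fun x => smoothTransition ((z + η - x) / η)) m := by
  have hcont : Continuous fun x => smoothTransition ((z + η - x) / η) :=
    smoothTransition.continuous.comp (by fun_prop)
  refine .of_bound hcont.aestronglyMeasurable 1 (.of_forall fun x => ?_)
  rw [norm_of_nonneg (smoothTransition.nonneg _)]
  exact smoothTransition.le_one _

theorem measureReal_Iic_le_integral_smoothTransition (hη : 0 < η) :
    m.real (Iic z) ≤ ∫ x, smoothTransition ((z + η - x) / η) ∂m := by
  rw [← integral_indicator_one measurableSet_Iic]
  refine integral_mono ((integrable_const 1).indicator measurableSet_Iic)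
    (integrable_smoothTransition_cutoff m z) (indicator_le' (fun x hx => ?_) fun x _ => ?_)
  · have : 1 ≤ (z + η - x) / η := by rw [le_div_iff₀ hη]; linarith [mem_Iic.1 hx]
    exact (smoothTransition.one_of_one_le this).ge
  · exact smoothTransition.nonneg _

theorem integral_smoothTransition_le_measureReal_Iic (hη : 0 < η) :
    ∫ x, smoothTransition ((z + η - x) / η) ∂m ≤ m.real (Iic (z + η)) := by
  rw [← integral_indicator_one measurableSet_Iic]
  refine integral_mono (integrable_smoothTransition_cutoff m z)
    ((integrable_const 1).indicator measurableSet_Iic)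
    (le_indicator (fun x _ => smoothTransition.le_one _) fun x hx => ?_)
  have : (z + η - x) / η ≤ 0 :=
    div_nonpos_of_nonpos_of_nonneg (by linarith [not_le.1 (mem_Iic.not.1 hx)]) hη.le
  exact (smoothTransition.zero_of_nonpos this).le

end SmoothCutoff

theorem le_measure_Iic_of_forall_gt {m : Measure ℝ} [IsFiniteMeasure m] {c : ENNReal} {q : ℝ}
    (h : ∀ x, q < x → c ≤ m (Iic x)) : c ≤ m (Iic q) := by
  have hlim := tendsto_measure_biInter_gt (μ := m) (s := Iic) (a := q)
    (fun _ _ => measurableSet_Iic.nullMeasurableSet) (fun _ _ _ hij => Iic_subset_Iic.2 hij)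
    ⟨q + 1, by linarith, measure_ne_top _ _⟩
  have hInter : ⋂ r > q, Iic r = Iic q := by
    ext y
    simp only [mem_iInter, mem_Iic]
    exact ⟨fun hy => le_of_forall_gt_imp_ge_of_dense hy, fun hy r hr => hy.trans (le_of_lt hr)⟩
  rw [hInter] at hlim
  exact ge_of_tendsto hlim (eventually_mem_nhdsWithin.mono h)

theorem le_of_forall_pos_le_add_of_le {a b ρ : ℝ} (hρ : 0 < ρ)
    (h : ∀ η, 0 < η → η ≤ ρ → a ≤ b + η) : a ≤ b :=
  le_of_forall_pos_le_add fun ε hε =>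
    (h (min ε ρ) (lt_min hε hρ) (min_le_right _ _)).trans (by gcongr; exact min_le_left _ _)

theorem intervalIntegral_nonneg_of_forall_mul_nonneg {g : ℝ → ℝ} {s t : ℝ}
    (h : ∀ r ∈ uIcc s t, 0 ≤ (t - s) * g r) : 0 ≤ ∫ r in s..t, g r := by
  rcases lt_trichotomy s t with hst | rfl | hst
  · refine intervalIntegral.integral_nonneg hst.le fun r hr => ?_
    exact nonneg_of_mul_nonneg_right (h r (Icc_subset_uIcc hr)) (sub_pos.2 hst)
  · rw [intervalIntegral.integral_same]
  · rw [intervalIntegral.integral_symm, ← intervalIntegral.integral_neg]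
    refine intervalIntegral.integral_nonneg hst.le fun r hr => ?_
    have := h r (Icc_subset_uIcc' hr)
    nlinarith

theorem exists_abs_le_mul_one_add_sq {h : ℝ → ℝ} (hd : Differentiable ℝ h) {L : NNReal}
    (hL : LipschitzWith L (deriv h)) : ∃ C, ∀ w, |h w| ≤ C * (1 + w ^ 2) := by
  refine ⟨|h 0| + |deriv h 0| + L, fun w => ?_⟩
  have hderiv : ∀ x ∈ uIcc 0 w, ‖deriv h x‖ ≤ |deriv h 0| + L * |w| := fun x hx => by
    have hxw : |x| ≤ |w| := by simpa using abs_sub_left_of_mem_uIcc hx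
    calc ‖deriv h x‖ ≤ ‖deriv h 0‖ + ‖deriv h x - deriv h 0‖ := norm_le_norm_add_norm_sub' _ _
      _ ≤ ‖deriv h 0‖ + L * ‖x - 0‖ := by gcongr; exact hL.norm_sub_le x 0
      _ ≤ |deriv h 0| + L * |w| := by rw [sub_zero, norm_eq_abs, norm_eq_abs]; gcongr
  have hmean : ‖h w - h 0‖ ≤ (|deriv h 0| + L * |w|) * ‖w - 0‖ :=
    (convex_uIcc 0 w).norm_image_sub_le_of_norm_hasDerivWithin_le
      (fun x _ => (hd x).hasDerivAt.hasDerivWithinAt) hderiv left_mem_uIcc right_mem_uIcc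
  have hw : |w| ≤ 1 + w ^ 2 := by nlinarith [sq_abs w, sq_nonneg (|w| - 1)]
  calc |h w| ≤ |h 0| + ‖h w - h 0‖ := norm_le_norm_add_norm_sub' (h w) (h 0)
    _ ≤ |h 0| + (|deriv h 0| + L * |w|) * |w| := by simpa using hmean
    _ = |h 0| * 1 + |deriv h 0| * |w| + L * w ^ 2 := by rw [← sq_abs w]; ring
    _ ≤ |h 0| * (1 + w ^ 2) + |deriv h 0| * (1 + w ^ 2) + L * (1 + w ^ 2) := by
      gcongr <;> linarith [sq_nonneg w]
    _ = (|h 0| + |deriv h 0| + L) * (1 + w ^ 2) := by ring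

theorem sq_integral_le_measureReal_mul_integral_sq {α : Type*} {m : MeasurableSpace α}
    {ν : Measure α} [IsFiniteMeasure ν] {h : α → ℝ} (hh : MemLp h 2 ν) :
    (∫ x, h x ∂ν) ^ 2 ≤ ν.real univ * ∫ x, h x ^ 2 ∂ν := by
  have hint : Integrable h ν := hh.integrable one_le_two
  have hquad : ∀ r : ℝ,
      0 ≤ ν.real univ * (r * r) + -(2 * ∫ x, h x ∂ν) * r + ∫ x, h x ^ 2 ∂ν := fun r =>
    calc 0 ≤ ∫ x, (h x - r) ^ 2 ∂ν := integral_nonneg fun x => sq_nonneg _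
      _ = ∫ x, (h x ^ 2 - 2 * r * h x + r ^ 2) ∂ν := by congr 1; ext x; ring
      _ = _ := by
        have hlin : Integrable (fun x => 2 * r * h x) ν := hint.const_mul _
        rw [integral_add (hh.integrable_sq.sub' hlin) (integrable_const _),
          integral_sub hh.integrable_sq hlin, integral_const_mul, integral_const,
          smul_eq_mul]
        ring
  have := discrim_le_zero hquad
  rw [discrim] at this
  linarith

end Preliminaries

section Quantile

/-- The measure `m` of some half-line `(-∞, x]` reaches the level `ξ`. For `ξ > 0` and `m` carried
by `[0, ∞)`, this says that the set in the definition of `quantile` is nonempty, so that its infimum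
is not the junk value `0`. -/
def AttainsMass (m : Measure ℝ) (ξ : ℝ) : Prop :=
  ∃ x, ENNReal.ofReal ξ ≤ m (Iic x)

theorem AttainsMass.mono {m : Measure ℝ} {ζ ξ : ℝ} (hξ : AttainsMass m ξ) (h : ζ ≤ ξ) :
    AttainsMass m ζ :=
  hξ.imp fun _ => (ENNReal.ofReal_le_ofReal h).trans

theorem AttainsMass.ofReal_le_measure_univ {m : Measure ℝ} {ξ : ℝ} (h : AttainsMass m ξ) :
    ENNReal.ofReal ξ ≤ m univ :=
  let ⟨_, hx⟩ := h
  hx.trans (measure_mono (subset_univ _))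

theorem attainsMass_of_lt_measure_univ {m : Measure ℝ} {ξ : ℝ} (h : ENNReal.ofReal ξ < m univ) :
    AttainsMass m ξ :=
  ((tendsto_measure_Iic_atTop m).eventually (lt_mem_nhds h)).exists.imp fun _ => le_of_lt

theorem measure_Icc_zero_eq_measure_Iic {m : Measure ℝ} (hm : m (Iio 0) = 0) (x : ℝ) :
    m (Icc 0 x) = m (Iic x) := by
  rw [← Ici_inter_Iic, inter_comm]
  exact measure_inter_conull (by rwa [compl_Ici (a := (0 : ℝ))])

variable {μ : ℝ → Measure ℝ} {t ξ ζ x : ℝ}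

theorem quantile_nonneg (μ : ℝ → Measure ℝ) (t ξ : ℝ) : 0 ≤ quantile μ t ξ :=
  Real.sInf_nonneg fun _ hx => hx.1

theorem quantile_congr {μ₁ μ₂ : ℝ → Measure ℝ} (h : μ₁ t = μ₂ t) (ξ : ℝ) :
    quantile μ₁ t ξ = quantile μ₂ t ξ := by
  rw [quantile, quantile, h]

theorem setOf_ofReal_le_measure_Icc (hμ : μ t (Iio 0) = 0) (hξ : 0 < ξ) :
    {x | 0 ≤ x ∧ ENNReal.ofReal ξ ≤ μ t (Icc 0 x)} = {x | ENNReal.ofReal ξ ≤ μ t (Iic x)} := by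
  simp only [measure_Icc_zero_eq_measure_Iic hμ]
  refine Subset.antisymm (fun x hx => hx.2) fun x hx => ⟨not_lt.1 fun hneg => ?_, hx⟩
  have hnull : μ t (Iic x) = 0 := measure_mono_null (fun y (hy : y ≤ x) => hy.trans_lt hneg) hμ
  exact hξ.not_ge (ENNReal.ofReal_eq_zero.1 (le_zero_iff.1 (le_of_le_of_eq hx hnull)))

theorem quantile_le_iff [IsFiniteMeasure (μ t)] (hμ : μ t (Iio 0) = 0) (hξ : 0 < ξ)
    (hξμ : AttainsMass (μ t) ξ) :
    quantile μ t ξ ≤ x ↔ ENNReal.ofReal ξ ≤ μ t (Iic x) := by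
  have hset := setOf_ofReal_le_measure_Icc hμ hξ
  have hbdd : BddBelow {x | ENNReal.ofReal ξ ≤ μ t (Iic x)} := hset ▸ ⟨0, fun _ hx => hx.1⟩
  rw [quantile, hset]
  refine ⟨fun h => le_measure_Iic_of_forall_gt fun w hw => ?_, fun h => csInf_le hbdd h⟩
  obtain ⟨y, hy, hyw⟩ := exists_lt_of_csInf_lt hξμ (h.trans_lt hw)
  exact le_trans hy (measure_mono (Iic_subset_Iic.2 hyw.le))

theorem ofReal_le_measure_Iic_quantile [IsFiniteMeasure (μ t)] (hμ : μ t (Iio 0) = 0) (hξ : 0 < ξ)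
    (hξμ : AttainsMass (μ t) ξ) : ENNReal.ofReal ξ ≤ μ t (Iic (quantile μ t ξ)) :=
  (quantile_le_iff hμ hξ hξμ).1 le_rfl

theorem quantile_mono [IsFiniteMeasure (μ t)] (hμ : μ t (Iio 0) = 0) (hζ : 0 < ζ) (h : ζ ≤ ξ)
    (hξμ : AttainsMass (μ t) ξ) : quantile μ t ζ ≤ quantile μ t ξ :=
  (quantile_le_iff hμ hζ (hξμ.mono h)).2 <| (ENNReal.ofReal_le_ofReal h).trans <|
    ofReal_le_measure_Iic_quantile hμ (hζ.trans_le h) hξμ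

end Quantile

/-- `μ` is a measure-valued solution of the linear transport equation `w_t + (v w)_x = 0` on the
quarter plane, with a continuous speed `v` and with finite measures carried by `[0, ∞)`. The weak
formulation tests against functions that need not vanish at `x = 0`, so mass is conserved. -/
structure IsTransportSol (v : ℝ → ℝ → ℝ) (μ : ℝ → Measure ℝ) : Prop where
  measure_univ_lt_top : ∀ t : ℝ, 0 ≤ t → μ t univ < ⊤
  measure_Iio : ∀ t : ℝ, 0 ≤ t → μ t (Iio 0) = 0
  weak_form : ∀ t₁ t₂ : ℝ, 0 ≤ t₁ → t₁ < t₂ → ∀ φ : ℝ → ℝ → ℝ,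
    ContDiff ℝ 1 (Function.uncurry φ) → HasCompactSupport (Function.uncurry φ) →
    (∫ x, φ t₂ x ∂(μ t₂)) - (∫ x, φ t₁ x ∂(μ t₁)) =
      ∫ t in t₁..t₂, ∫ x,
        (deriv (fun s => φ s x) t + deriv (fun y => φ t y) x * v t x) ∂(μ t)
  continuousOn_speed : ContinuousOn (Function.uncurry v) (Ici 0 ×ˢ Ici 0)

namespace IsTransportSol

variable {v : ℝ → ℝ → ℝ} {μ : ℝ → Measure ℝ} {s t ξ : ℝ}

theorem isFiniteMeasure (h : IsTransportSol v μ) (ht : 0 ≤ t) : IsFiniteMeasure (μ t) :=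
  ⟨h.measure_univ_lt_top t ht⟩

theorem ae_nonneg (h : IsTransportSol v μ) (ht : 0 ≤ t) : ∀ᵐ x ∂(μ t), 0 ≤ x := by
  simpa only [ae_iff, not_le] using! h.measure_Iio t ht

theorem weak_form_of_nonneg (h : IsTransportSol v μ) (hs : 0 ≤ s) (ht : 0 ≤ t) {φ : ℝ → ℝ → ℝ}
    (hφ : ContDiff ℝ 1 (Function.uncurry φ)) (hsupp : HasCompactSupport (Function.uncurry φ)) :
    (∫ x, φ t x ∂(μ t)) - (∫ x, φ s x ∂(μ s)) =
      ∫ r in s..t, ∫ x,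
        (deriv (fun q => φ q x) r + deriv (fun y => φ r y) x * v r x) ∂(μ r) := by
  rcases lt_trichotomy s t with hst | rfl | hst
  · exact h.weak_form s t hs hst φ hφ hsupp
  · rw [sub_self, intervalIntegral.integral_same]
  · rw [intervalIntegral.integral_symm, ← h.weak_form t s ht hst φ hφ hsupp, neg_sub]

theorem weak_form_of_eq_zero (h : IsTransportSol v μ) (hs : 0 ≤ s) (ht : 0 ≤ t) {φ : ℝ → ℝ → ℝ}
    (hφ : ContDiff ℝ 1 (Function.uncurry φ)) {T R : ℝ} (hsT : s < T) (htT : t < T)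
    (hR : ∀ r x, |r| < T → R ≤ x → φ r x = 0) :
    (∫ x, φ t x ∂(μ t)) - (∫ x, φ s x ∂(μ s)) =
      ∫ r in s..t, ∫ x,
        (deriv (fun q => φ q x) r + deriv (fun y => φ r y) x * v r x) ∂(μ r) := by
  have hT : 0 < T := hs.trans_lt hsT
  let χ : ContDiffBump (0 : ℝ × ℝ) := ⟨max T R + 1, max T R + 2, by positivity, by linarith⟩
  set ψ : ℝ → ℝ → ℝ := fun r x => φ r x * χ (r, x)
  have hψφ : ∀ r x, |r| < T → -1 < x → ψ r x = φ r x := by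
    intro r x hr hx
    rcases le_total R x with hxR | hxR
    · simp only [ψ, hR r x hr hxR, zero_mul]
    · have hmem : (r, x) ∈ Metric.closedBall 0 χ.rIn := by
        rw [mem_closedBall_zero_iff, Prod.norm_mk, norm_eq_abs, norm_eq_abs]
        refine max_le ?_ (abs_le.2 ⟨?_, ?_⟩) <;> simp only [χ] <;>
          linarith [le_max_left T R, le_max_right T R]
      simp only [ψ, χ.one_of_mem_closedBall hmem, mul_one]
  have hint : ∀ r, 0 ≤ r → r < T → ∫ x, ψ r x ∂(μ r) = ∫ x, φ r x ∂(μ r) := fun r hr hrT =>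
    integral_congr_ae <| (h.ae_nonneg hr).mono fun x hx =>
      hψφ r x (by rwa [abs_of_nonneg hr]) (by linarith)
  have key := h.weak_form_of_nonneg hs ht (φ := ψ) (hφ.mul χ.contDiff) χ.hasCompactSupport.mul_left
  rw [hint t ht htT, hint s hs hsT] at key
  rw [key]
  refine intervalIntegral.integral_congr fun r hr => integral_congr_ae ?_
  have hr0 : 0 ≤ r := (le_min hs ht).trans hr.1
  have hrT : |r| < T := by rw [abs_of_nonneg hr0]; exact hr.2.trans_lt (max_lt hsT htT)
  filter_upwards [h.ae_nonneg hr0] with x hx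
  have htime : (fun q => ψ q x) =ᶠ[𝓝 r] fun q => φ q x :=
    ((continuous_abs.tendsto r).eventually (gt_mem_nhds hrT)).mono fun q hq =>
      hψφ q x hq (by linarith)
  have hspace : ψ r =ᶠ[𝓝 x] φ r :=
    (lt_mem_nhds (show -1 < x by linarith)).mono fun y hy => hψφ r y hrT hy
  rw [htime.deriv_eq, hspace.deriv_eq]

theorem integral_smoothTransition_sub (h : IsTransportSol v μ) (hs : 0 ≤ s) (ht : 0 ≤ t)
    (k z : ℝ) {η : ℝ} (hη : 0 < η) :
    (∫ x, smoothTransition ((z + k * (t - s) + η - x) / η) ∂(μ t)) -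
        ∫ x, smoothTransition ((z + η - x) / η) ∂(μ s) =
      ∫ r in s..t, ∫ x,
        deriv smoothTransition ((z + k * (r - s) + η - x) / η) / η * (k - v r x) ∂(μ r) := by
  have hS : ∀ w, HasDerivAt smoothTransition (deriv smoothTransition w) w := fun w =>
    (smoothTransition.contDiffAt (n := 1)).differentiableAt one_ne_zero |>.hasDerivAt
  have key := h.weak_form_of_eq_zero hs ht
    (φ := fun r x => smoothTransition ((z + k * (r - s) + η - x) / η))
    (T := s + t + 1) (R := z + |k| * (s + t + 1 + s) + η)
    (smoothTransition.contDiff.comp (by fun_prop)) (by linarith) (by linarith) fun r x hr hx => by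
      refine smoothTransition.zero_of_nonpos (div_nonpos_of_nonpos_of_nonneg ?_ hη.le)
      have hrs : |r - s| ≤ s + t + 1 + s := (abs_sub r s).trans (by rw [abs_of_nonneg hs]; linarith)
      have : k * (r - s) ≤ |k| * (s + t + 1 + s) := (le_abs_self _).trans <| by
        rw [abs_mul]; gcongr
      linarith
  simp only [sub_self, mul_zero, add_zero] at key
  rw [key]
  refine intervalIntegral.integral_congr fun r _ => integral_congr_ae (.of_forall fun x => ?_)
  have htime : HasDerivAt (fun q => (z + k * (q - s) + η - x) / η) (k / η) r := by
    simpa using ((((hasDerivAt_id r).sub_const s).const_mul k).const_add z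
      |>.add_const η |>.sub_const x |>.div_const η)
  have hspace : HasDerivAt (fun y => (z + k * (r - s) + η - y) / η) (-1 / η) x :=
    ((hasDerivAt_id x).const_sub _).div_const η
  calc _ = deriv smoothTransition ((z + k * (r - s) + η - x) / η) * (k / η) +
        deriv smoothTransition ((z + k * (r - s) + η - x) / η) * (-1 / η) * v r x :=
      congrArg₂ (· + · * v r x) ((hS _).comp r htime).deriv ((hS _).comp x hspace).deriv
    _ = _ := by ring

-- The factor `t - s` in `hk` makes the statement cover both directions of time.
theorem measure_Iic_le_measure_Iic_add (h : IsTransportSol v μ) (hs : 0 ≤ s) (ht : 0 ≤ t)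
    {k z η : ℝ} (hη : 0 < η)
    (hk : ∀ r ∈ uIcc s t, ∀ x, 0 ≤ x → x ∈ Icc (z + k * (r - s)) (z + k * (r - s) + η) →
      0 ≤ (t - s) * (k - v r x)) :
    μ s (Iic z) ≤ μ t (Iic (z + k * (t - s) + η)) := by
  have := h.isFiniteMeasure hs
  have := h.isFiniteMeasure ht
  have hflux : 0 ≤ ∫ r in s..t, ∫ x,
      deriv smoothTransition ((z + k * (r - s) + η - x) / η) / η * (k - v r x) ∂(μ r) := by
    refine intervalIntegral_nonneg_of_forall_mul_nonneg fun r hr => ?_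
    rw [← integral_const_mul]
    refine integral_nonneg_of_ae ?_
    filter_upwards [h.ae_nonneg ((le_min hs ht).trans hr.1)] with x hx
    by_cases hw : (z + k * (r - s) + η - x) / η ∈ Icc 0 1
    · rw [mem_Icc, le_div_iff₀ hη, div_le_iff₀ hη] at hw
      have := hk r hr x hx ⟨by linarith, by linarith⟩
      rw [mul_left_comm]
      exact mul_nonneg (div_nonneg smoothTransition.monotone.deriv_nonneg hη.le) this
    · simp only [deriv_smoothTransition_eq_zero hw, zero_div, zero_mul, mul_zero, Pi.zero_apply,
        le_refl]
  rw [← ENNReal.toReal_le_toReal (measure_ne_top _ _) (measure_ne_top _ _)]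
  change (μ s).real _ ≤ (μ t).real _
  linarith [h.integral_smoothTransition_sub hs ht k z hη,
    measureReal_Iic_le_integral_smoothTransition (μ s) z hη,
    integral_smoothTransition_le_measureReal_Iic (μ t) (z + k * (t - s)) hη]

theorem quantile_le_iff (h : IsTransportSol v μ) (ht : 0 ≤ t) (hξ : 0 < ξ)
    (hξμ : AttainsMass (μ t) ξ) {x : ℝ} :
    quantile μ t ξ ≤ x ↔ ENNReal.ofReal ξ ≤ μ t (Iic x) :=
  have := h.isFiniteMeasure ht
  _root_.quantile_le_iff (h.measure_Iio t ht) hξ hξμ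

theorem ofReal_le_measure_Iic (h : IsTransportSol v μ) (hs : 0 ≤ s) (ht : 0 ≤ t) (hξ : 0 < ξ)
    (hξμ : AttainsMass (μ s) ξ) {k ρ : ℝ}
    (hk : ∀ r ∈ uIcc s t, ∀ x, 0 ≤ x → |x - (quantile μ s ξ + k * (r - s))| ≤ ρ →
      0 ≤ (t - s) * (k - v r x)) {η : ℝ} (hη : 0 < η) (hηρ : η ≤ ρ) :
    ENNReal.ofReal ξ ≤ μ t (Iic (quantile μ s ξ + k * (t - s) + η)) :=
  ((h.quantile_le_iff hs hξ hξμ).1 le_rfl).trans <|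
    h.measure_Iic_le_measure_Iic_add hs ht hη fun r hr x hx hxk => hk r hr x hx <| by
      rw [abs_le]; constructor <;> linarith [hxk.1, hxk.2]

theorem quantile_le_quantile_add (h : IsTransportSol v μ) (hs : 0 ≤ s) (ht : 0 ≤ t) (hξ : 0 < ξ)
    (hξμ : AttainsMass (μ s) ξ) {k ρ : ℝ} (hρ : 0 < ρ)
    (hk : ∀ r ∈ uIcc s t, ∀ x, 0 ≤ x → |x - (quantile μ s ξ + k * (r - s))| ≤ ρ →
      0 ≤ (t - s) * (k - v r x)) :
    AttainsMass (μ t) ξ ∧ quantile μ t ξ ≤ quantile μ s ξ + k * (t - s) := by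
  have hξt : AttainsMass (μ t) ξ := ⟨_, h.ofReal_le_measure_Iic hs ht hξ hξμ hk hρ le_rfl⟩
  exact ⟨hξt, le_of_forall_pos_le_add_of_le hρ fun η hη hηρ =>
    (h.quantile_le_iff ht hξ hξt).2 (h.ofReal_le_measure_Iic hs ht hξ hξμ hk hη hηρ)⟩

theorem quantile_add_le_quantile (h : IsTransportSol v μ) (hs : 0 ≤ s) (ht : 0 ≤ t) (hξ : 0 < ξ)
    (hξs : AttainsMass (μ s) ξ) (hξt : AttainsMass (μ t) ξ) {k ρ : ℝ} (hρ : 0 < ρ)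
    (hk : ∀ r ∈ uIcc s t, ∀ x, 0 ≤ x → |x - (quantile μ s ξ + k * (r - s))| ≤ ρ →
      0 ≤ (t - s) * (v r x - k)) :
    quantile μ s ξ + k * (t - s) ≤ quantile μ t ξ := by
  refine le_of_forall_pos_le_add_of_le (half_pos hρ) fun η hη hηρ => ?_
  by_contra! hlt
  have hle := (h.quantile_le_iff ht hξ hξt).1
    (show quantile μ t ξ ≤ quantile μ s ξ + k * (t - s) - η by linarith)
  have hback := h.measure_Iic_le_measure_Iic_add ht hs (k := k) (half_pos hη)
    (z := quantile μ s ξ + k * (t - s) - η) fun r hr x hx hxk => by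
      have := hk r (uIcc_comm t s ▸ hr) x hx
        (by rw [abs_le]; constructor <;> linarith [hxk.1, hxk.2])
      linarith
  have := (h.quantile_le_iff hs hξ hξs).2 (hle.trans hback)
  linarith

theorem abs_quantile_sub_sub_le (h : IsTransportSol v μ) (hs : 0 ≤ s) (ht : 0 ≤ t) (hξ : 0 < ξ)
    (hξs : AttainsMass (μ s) ξ) {a ε ρ : ℝ} (hε : 0 ≤ ε) (hρ : 0 < ρ)
    (hv : ∀ r ∈ uIcc s t, ∀ x, 0 ≤ x → |x - quantile μ s ξ| ≤ (|a| + ε) * |t - s| + ρ →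
      |v r x - a| ≤ ε) :
    AttainsMass (μ t) ξ ∧ |quantile μ t ξ - quantile μ s ξ - a * (t - s)| ≤ ε * |t - s| := by
  obtain ⟨σ, hσ, hσts⟩ : ∃ σ : ℝ, |σ| ≤ 1 ∧ σ * (t - s) = |t - s| := by
    rcases abs_cases (t - s) with hts | hts
    exacts [⟨1, by simp, by rw [hts.1, one_mul]⟩, ⟨-1, by simp, by rw [hts.1, neg_one_mul]⟩]
  have hline : ∀ k, |k| ≤ |a| + ε → ∀ r ∈ uIcc s t, ∀ x, 0 ≤ x →
      |x - (quantile μ s ξ + k * (r - s))| ≤ ρ → |v r x - a| ≤ ε := by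
    intro k hk r hr x hx hxk
    refine hv r hr x hx ?_
    calc |x - quantile μ s ξ| = |(x - (quantile μ s ξ + k * (r - s))) + k * (r - s)| := by ring_nf
      _ ≤ |x - (quantile μ s ξ + k * (r - s))| + |k| * |r - s| := by
        rw [← abs_mul]; exact abs_add_le _ _
      _ ≤ ρ + (|a| + ε) * |t - s| :=
        add_le_add hxk (mul_le_mul hk (abs_sub_left_of_mem_uIcc hr) (abs_nonneg _) (by positivity))
      _ = (|a| + ε) * |t - s| + ρ := add_comm _ _
  have hσε : |σ * ε| ≤ ε := by
    rw [abs_mul, abs_of_nonneg hε]; exact mul_le_of_le_one_left hε hσ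
  have hflux : ∀ w, |w - a| ≤ ε → |(t - s) * (w - a)| ≤ ε * |t - s| := fun w hw => by
    rw [abs_mul, mul_comm]; gcongr
  have hσε' : (t - s) * (σ * ε) = ε * |t - s| := by rw [← hσts]; ring
  obtain ⟨hξt, hupper⟩ := h.quantile_le_quantile_add hs ht hξ hξs (k := a + σ * ε) hρ
    fun r hr x hx hxk => by
      have := hflux _ (hline _ ((abs_add_le _ _).trans (by gcongr)) r hr x hx hxk)
      linarith [le_of_abs_le this]
  have hlower := h.quantile_add_le_quantile hs ht hξ hξs hξt (k := a - σ * ε) hρ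
    fun r hr x hx hxk => by
      have := hflux _ (hline _ ((abs_sub _ _).trans (by gcongr)) r hr x hx hxk)
      linarith [neg_le_of_abs_le this]
  exact ⟨hξt, abs_le.2 ⟨by linarith, by linarith⟩⟩

theorem hasDerivWithinAt_quantile (h : IsTransportSol v μ) (ht : 0 ≤ t) (hξ : 0 < ξ)
    (hξt : AttainsMass (μ t) ξ) :
    HasDerivWithinAt (fun r => quantile μ r ξ) (v t (quantile μ t ξ)) (Ici 0) t := by
  rw [hasDerivWithinAt_iff_isLittleO, Asymptotics.isLittleO_iff]
  intro ε hε
  set q := quantile μ t ξ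
  set a := v t q
  obtain ⟨ρ, hρ, hball⟩ := Metric.continuousWithinAt_iff.1
    (h.continuousOn_speed (t, q) ⟨ht, quantile_nonneg μ t ξ⟩) ε hε
  have hclose : ∀ r x, 0 ≤ r → 0 ≤ x → |r - t| < ρ → |x - q| < ρ → |v r x - a| ≤ ε :=
    fun r x hr hx hrρ hxρ => (hball (x := (r, x)) ⟨hr, hx⟩ (max_lt hrρ hxρ)).le
  have hlim : Tendsto (fun s => (|a| + ε) * |s - t| + ρ / 2) (𝓝[Ici 0] t) (𝓝 (ρ / 2)) :=
    (Continuous.tendsto' (by fun_prop) _ _ (by simp)).mono_left nhdsWithin_le_nhds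
  filter_upwards [self_mem_nhdsWithin, hlim.eventually (gt_mem_nhds (half_lt_self hρ)),
    nhdsWithin_le_nhds (Metric.ball_mem_nhds t hρ)] with s hs hsρ hst
  rw [smul_eq_mul, mul_comm (s - t)]
  refine (h.abs_quantile_sub_sub_le ht hs hξ hξt hε.le (half_pos hρ) fun r hr x hx hxq => ?_).2
  exact hclose r x ((le_min ht hs).trans hr.1) hx
    ((abs_sub_left_of_mem_uIcc hr).trans_lt hst) (hxq.trans_lt hsρ)

theorem exists_attainsMass_of_abs_sub_le (h : IsTransportSol v μ) (hξ : 0 < ξ) (T B : ℝ) :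
    ∃ δ > 0, ∀ s ∈ Icc 0 T, ∀ t ∈ Icc 0 T, |t - s| ≤ δ → AttainsMass (μ s) ξ →
      quantile μ s ξ ≤ B → AttainsMass (μ t) ξ := by
  obtain ⟨V, hV⟩ := (isCompact_Icc.prod isCompact_Icc).exists_bound_of_continuousOn
    (h.continuousOn_speed.mono <| prod_mono (Icc_subset_Ici_self : Icc 0 T ⊆ Ici 0)
      (Icc_subset_Ici_self : Icc 0 (B + 2) ⊆ Ici 0))
  have hV1 : 0 < |V| + 1 := by positivity
  refine ⟨1 / (|V| + 1), by positivity, fun s hs t ht hts hξs hB => ?_⟩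
  refine (h.abs_quantile_sub_sub_le hs.1 ht.1 hξ hξs (a := 0) (abs_nonneg V) one_pos
    fun r hr x hx hxq => ?_).1
  have hVts : |V| * |t - s| ≤ 1 := by
    rw [le_div_iff₀ hV1] at hts
    nlinarith [abs_nonneg (t - s)]
  rw [abs_zero, zero_add] at hxq
  rw [sub_zero]
  exact (hV (r, x) ⟨uIcc_subset_Icc hs ht hr, hx, by linarith [le_of_abs_le hxq]⟩).trans
    (le_abs_self V)

theorem one_add_quantile_le (h : IsTransportSol v μ) {K : ℝ} (hs : 0 ≤ s) (ht : 0 ≤ t) (hξ : 0 < ξ)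
    (hξst : ∀ r ∈ uIcc s t, AttainsMass (μ r) ξ)
    (hK : ∀ r ∈ uIcc s t, |v r (quantile μ r ξ)| ≤ K * (1 + quantile μ r ξ)) :
    1 + quantile μ t ξ ≤ (1 + quantile μ s ξ) * exp (K * |t - s|) := by
  have hpos : ∀ r, 0 < 1 + quantile μ r ξ := fun r => by linarith [quantile_nonneg μ r ξ]
  have hsub : uIcc s t ⊆ Ici 0 := fun r hr => (le_min hs ht).trans hr.1
  have hlog : ‖log (1 + quantile μ t ξ) - log (1 + quantile μ s ξ)‖ ≤ K * ‖t - s‖ :=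
    (convex_uIcc s t).norm_image_sub_le_of_norm_hasDerivWithin_le
      (f := fun r => log (1 + quantile μ r ξ))
      (fun r hr => (((h.hasDerivWithinAt_quantile (hsub hr) hξ (hξst r hr)).mono hsub).const_add
        1).log (hpos r).ne')
      (fun r hr => by
        rw [norm_div, norm_eq_abs, norm_of_nonneg (hpos r).le, div_le_iff₀ (hpos r)]
        exact hK r hr)
      left_mem_uIcc right_mem_uIcc
  rw [← log_le_log_iff (hpos t) (mul_pos (hpos s) (exp_pos _)),
    log_mul (hpos s).ne' (exp_ne_zero _), log_exp]
  rw [norm_eq_abs, norm_eq_abs] at hlog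
  linarith [le_of_abs_le hlog]

theorem attainsMass_of_abs_speed_le (h : IsTransportSol v μ) {K : ℝ} (hξ : 0 < ξ)
    (hK : ∀ r, 0 ≤ r → AttainsMass (μ r) ξ →
      |v r (quantile μ r ξ)| ≤ K * (1 + quantile μ r ξ))
    (hs : 0 ≤ s) (hξs : AttainsMass (μ s) ξ) (ht : 0 ≤ t) : AttainsMass (μ t) ξ := by
  have hK0 : 0 ≤ K := nonneg_of_mul_nonneg_left ((abs_nonneg _).trans (hK s hs hξs))
    (by linarith [quantile_nonneg μ s ξ])
  set T := max s t
  have hsT : s ∈ Icc 0 T := ⟨hs, le_max_left s t⟩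
  have htT : t ∈ Icc 0 T := ⟨ht, le_max_right s t⟩
  obtain ⟨δ, hδ, hstep⟩ :=
    h.exists_attainsMass_of_abs_sub_le hξ T ((1 + quantile μ s ξ) * exp (K * T))
  let Reached (r : ℝ) : Prop := ∀ p ∈ uIcc s r, AttainsMass (μ p) ξ
  have hbound : ∀ p ∈ Icc 0 T, Reached p →
      quantile μ p ξ ≤ (1 + quantile μ s ξ) * exp (K * T) := by
    intro p hp hreach
    have hgrowth := h.one_add_quantile_le hs hp.1 hξ hreach fun r hr =>
      hK r (uIcc_subset_Icc hsT hp hr).1 (hreach r hr)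
    have hps : |p - s| ≤ T := abs_sub_le_of_nonneg_of_le hp.1 hp.2 hs hsT.2
    calc quantile μ p ξ ≤ (1 + quantile μ s ξ) * exp (K * |p - s|) := by linarith
      _ ≤ (1 + quantile μ s ξ) * exp (K * T) :=
        mul_le_mul_of_nonneg_left (exp_le_exp.2 (mul_le_mul_of_nonneg_left hps hK0))
          (by linarith [quantile_nonneg μ s ξ])
  have hextend : ∀ p ∈ Icc 0 T, ∀ r ∈ Icc 0 T, |r - p| ≤ δ → Reached p → Reached r := by
    intro p hp r hr hrp hreach w hw
    rcases uIcc_subset_uIcc_union_uIcc hw with hw | hw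
    · exact hreach w hw
    · exact hstep p hp w (uIcc_subset_Icc hp hr hw) ((abs_sub_left_of_mem_uIcc hw).trans hrp)
        (hreach p right_mem_uIcc) (hbound p hp hreach)
  have hreached : Reached s ↔ Reached t := by
    refine isPreconnected_Icc.induction₂ (fun p r => Reached p ↔ Reached r) (fun p hp => ?_)
      (fun _ _ _ _ _ _ => Iff.trans) (fun _ _ _ _ => Iff.symm) hsT htT
    filter_upwards [self_mem_nhdsWithin, nhdsWithin_le_nhds (Metric.closedBall_mem_nhds p hδ)]
      with r hr hrp
    exact ⟨hextend p hp r hr hrp, hextend r hr p hp (abs_sub_comm p r ▸ hrp)⟩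
  have hs' : Reached s := fun p hp => by
    rw [uIcc_self, mem_singleton_iff] at hp
    exact hp ▸ hξs
  exact hreached.1 hs' t right_mem_uIcc

end IsTransportSol

section Gronwall

theorem eq_zero_of_le_mul_integral {d : ℝ → ℝ} {a b K : ℝ} (hd : ContinuousOn d (Icc a b))
    (hd0 : ∀ t ∈ Icc a b, 0 ≤ d t) (h : ∀ t ∈ Icc a b, d t ≤ K * ∫ s in a..t, d s) :
    ∀ t ∈ Icc a b, d t = 0 := by
  have hint : ∀ t ∈ Icc a b, IntervalIntegrable d volume a t := fun t ht =>
    (hd.mono (uIcc_of_le ht.1 ▸ Icc_subset_Icc_right ht.2)).intervalIntegrable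
  have hpos : ∀ t ∈ Icc a b, 0 ≤ ∫ s in a..t, d s := fun t ht =>
    intervalIntegral.integral_nonneg ht.1 fun s hs => hd0 s ⟨hs.1, hs.2.trans ht.2⟩
  have hcont : ContinuousOn (fun t => ∫ s in a..t, d s) (Icc a b) :=
    (intervalIntegral.continuousOn_primitive hd.integrableOn_Icc).congr fun t ht =>
      intervalIntegral.integral_of_le ht.1
  have hzero : ∀ t ∈ Icc a b, ∫ s in a..t, d s = 0 := by
    refine eq_zero_of_abs_deriv_le_mul_abs_self_of_eq_zero_right (f' := d) (K := K)
      hcont (fun t ht => ?_) intervalIntegral.integral_same fun t ht => ?_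
    · have hmem : Icc a b ∈ 𝓝[>] t := Icc_mem_nhdsGT_of_mem ht
      exact intervalIntegral.integral_hasDerivWithinAt_right (hint t (Ico_subset_Icc_self ht))
        ⟨_, hmem, hd.aestronglyMeasurable measurableSet_Icc⟩
        ((hd t (Ico_subset_Icc_self ht)).mono_of_mem_nhdsWithin hmem)
    · have ht := Ico_subset_Icc_self ht
      rw [norm_of_nonneg (hd0 t ht), norm_of_nonneg (hpos t ht)]
      exact h t ht
  exact fun t ht => (hd0 t ht).antisymm' (by simpa only [hzero t ht, mul_zero] using h t ht)

/-- A bounded Carathéodory function on `[0, T] × (0, ξ]`: continuous in the first variable and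
measurable in the second. -/
structure IsBoundedCaratheodory (T ξ : ℝ) (G : ℝ → ℝ → ℝ) : Prop where
  aestronglyMeasurable : ∀ s ∈ Icc 0 T, AEStronglyMeasurable (G s) (volume.restrict (Ioc 0 ξ))
  exists_bound : ∃ R, ∀ s ∈ Icc 0 T, ∀ η ∈ Ioc 0 ξ, |G s η| ≤ R
  continuousOn : ∀ η ∈ Ioc 0 ξ, ContinuousOn (fun s => G s η) (Icc 0 T)

namespace IsBoundedCaratheodory

variable {T ξ s ζ : ℝ} {G H : ℝ → ℝ → ℝ} {g U₀ : ℝ → ℝ}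

theorem comp (hG : IsBoundedCaratheodory T ξ G) (hg : Continuous g) :
    IsBoundedCaratheodory T ξ (fun s η => g (G s η)) where
  aestronglyMeasurable s hs := hg.comp_aestronglyMeasurable (hG.aestronglyMeasurable s hs)
  exists_bound := by
    obtain ⟨R, hR⟩ := hG.exists_bound
    obtain ⟨B, hB⟩ := (isCompact_Icc (a := -R) (b := R)).exists_bound_of_continuousOn
      hg.continuousOn
    exact ⟨B, fun s hs η hη => hB _ (abs_le.1 (hR s hs η hη))⟩
  continuousOn η hη := hg.comp_continuousOn (hG.continuousOn η hη)

theorem sub (hG : IsBoundedCaratheodory T ξ G) (hH : IsBoundedCaratheodory T ξ H) :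
    IsBoundedCaratheodory T ξ (fun s η => G s η - H s η) where
  aestronglyMeasurable s hs := (hG.aestronglyMeasurable s hs).sub (hH.aestronglyMeasurable s hs)
  exists_bound := by
    obtain ⟨R, hR⟩ := hG.exists_bound
    obtain ⟨R', hR'⟩ := hH.exists_bound
    exact ⟨R + R', fun s hs η hη => (abs_sub _ _).trans (add_le_add (hR s hs η hη) (hR' s hs η hη))⟩
  continuousOn η hη := (hG.continuousOn η hη).sub (hH.continuousOn η hη)

theorem mono (hG : IsBoundedCaratheodory T ξ G) (hζ : ζ ≤ ξ) : IsBoundedCaratheodory T ζ G where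
  aestronglyMeasurable s hs :=
    (hG.aestronglyMeasurable s hs).mono_set (Ioc_subset_Ioc_right hζ)
  exists_bound := hG.exists_bound.imp fun _ hR s hs η hη => hR s hs η (Ioc_subset_Ioc_right hζ hη)
  continuousOn η hη := hG.continuousOn η (Ioc_subset_Ioc_right hζ hη)

theorem intervalIntegrable (hG : IsBoundedCaratheodory T ξ G) (hξ : 0 ≤ ξ) (hs : s ∈ Icc 0 T) :
    IntervalIntegrable (G s) volume 0 ξ := by
  rw [intervalIntegrable_iff_integrableOn_Ioc_of_le hξ]
  obtain ⟨R, hR⟩ := hG.exists_bound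
  exact Integrable.of_bound (hG.aestronglyMeasurable s hs) R
    (ae_restrict_of_forall_mem measurableSet_Ioc (hR s hs))

theorem continuousOn_integral (hG : IsBoundedCaratheodory T ξ G) (hξ : 0 ≤ ξ) :
    ContinuousOn (fun s => ∫ η in 0..ξ, G s η) (Icc 0 T) := by
  obtain ⟨R, hR⟩ := hG.exists_bound
  simp only [intervalIntegral.integral_of_le hξ]
  exact continuousOn_of_dominated (bound := fun _ => R) hG.aestronglyMeasurable
    (fun s hs => ae_restrict_of_forall_mem measurableSet_Ioc (hR s hs)) (integrable_const _)
    (ae_restrict_of_forall_mem measurableSet_Ioc hG.continuousOn)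

theorem exists_abs_integral_comp_sub_le (hG : IsBoundedCaratheodory T ξ G)
    (hH : IsBoundedCaratheodory T ξ H) (hg : LocallyLipschitz g) :
    ∃ L : NNReal, ∀ s ∈ Icc 0 T, ∀ ζ ∈ Ioc 0 ξ,
      |(∫ η in 0..ζ, g (G s η)) - ∫ η in 0..ζ, g (H s η)| ≤
        L * ∫ η in 0..ξ, |G s η - H s η| := by
  obtain ⟨R, hR⟩ := hG.exists_bound
  obtain ⟨R', hR'⟩ := hH.exists_bound
  obtain ⟨L, hL⟩ := (hg.locallyLipschitzOn (s := Metric.closedBall 0 (max R R'))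
    ).exists_lipschitzOnWith_of_compact (isCompact_closedBall _ _)
  refine ⟨L, fun s hs ζ hζ => ?_⟩
  have hdiff : ∀ {ζ}, 0 ≤ ζ → ζ ≤ ξ →
      IntervalIntegrable (fun η => |G s η - H s η|) volume 0 ζ := fun h0 hζ =>
    ((hG.sub hH).comp continuous_abs |>.mono hζ).intervalIntegrable h0 hs
  have hlip : ∀ η ∈ Ioc 0 ζ, ‖g (G s η) - g (H s η)‖ ≤ L * |G s η - H s η| := fun η hη => by
    have hη' := Ioc_subset_Ioc_right hζ.2 hη
    exact hL.norm_sub_le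
      (mem_closedBall_zero_iff.2 ((hR s hs η hη').trans (le_max_left _ _)))
      (mem_closedBall_zero_iff.2 ((hR' s hs η hη').trans (le_max_right _ _)))
  rw [← intervalIntegral.integral_sub
    (((hG.comp hg.continuous).mono hζ.2).intervalIntegrable hζ.1.le hs)
    (((hH.comp hg.continuous).mono hζ.2).intervalIntegrable hζ.1.le hs)]
  calc |∫ η in 0..ζ, (g (G s η) - g (H s η))|
      ≤ ∫ η in 0..ζ, L * |G s η - H s η| :=
        intervalIntegral.norm_integral_le_of_norm_le hζ.1.le (.of_forall hlip)
          ((hdiff hζ.1.le hζ.2).const_mul _)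
    _ = L * ∫ η in 0..ζ, |G s η - H s η| := intervalIntegral.integral_const_mul _ _
    _ ≤ L * ∫ η in 0..ξ, |G s η - H s η| := by
      gcongr
      exact intervalIntegral.integral_mono_interval le_rfl hζ.1.le hζ.2
        (.of_forall fun _ => abs_nonneg _) (hdiff (hζ.1.le.trans hζ.2) le_rfl)

theorem ae_eq_of_integral_eq (hξ : 0 ≤ ξ) (hG : IsBoundedCaratheodory T ξ G)
    (hH : IsBoundedCaratheodory T ξ H) (hg : LocallyLipschitz g)
    (eqG : ∀ᵐ ζ ∂(volume.restrict (Ioc 0 ξ)), ∀ t ∈ Icc 0 T,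
      G t ζ = U₀ ζ + ∫ s in 0..t, ∫ η in 0..ζ, g (G s η))
    (eqH : ∀ᵐ ζ ∂(volume.restrict (Ioc 0 ξ)), ∀ t ∈ Icc 0 T,
      H t ζ = U₀ ζ + ∫ s in 0..t, ∫ η in 0..ζ, g (H s η)) :
    ∀ᵐ ζ ∂(volume.restrict (Ioc 0 ξ)), ∀ t ∈ Icc 0 T, G t ζ = H t ζ := by
  obtain ⟨L, hL⟩ := hG.exists_abs_integral_comp_sub_le hH hg
  have habs := (hG.sub hH).comp continuous_abs
  set d : ℝ → ℝ := fun s => ∫ η in 0..ξ, |G s η - H s η|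
  have hd : ContinuousOn d (Icc 0 T) := habs.continuousOn_integral hξ
  have hpt : ∀ᵐ ζ ∂(volume.restrict (Ioc 0 ξ)), ∀ t ∈ Icc 0 T,
      |G t ζ - H t ζ| ≤ L * ∫ s in 0..t, d s := by
    filter_upwards [eqG, eqH, ae_restrict_mem measurableSet_Ioc] with ζ hζG hζH hζ t ht
    have hsub : uIcc 0 t ⊆ Icc 0 T := uIcc_of_le ht.1 ▸ Icc_subset_Icc_right ht.2
    have hint : ∀ {F}, IsBoundedCaratheodory T ξ F →
        IntervalIntegrable (fun s => ∫ η in 0..ζ, F s η) volume 0 t := fun hF =>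
      (((hF.mono hζ.2).continuousOn_integral hζ.1.le).mono hsub).intervalIntegrable
    rw [hζG t ht, hζH t ht, add_sub_add_left_eq_sub, ← intervalIntegral.integral_sub
      (hint (hG.comp hg.continuous)) (hint (hH.comp hg.continuous)),
      ← intervalIntegral.integral_const_mul, ← norm_eq_abs]
    refine intervalIntegral.norm_integral_le_of_norm_le ht.1 (.of_forall fun s hs => ?_)
      ((hd.mono hsub).intervalIntegrable.const_mul _)
    exact hL s (hsub ((Ioc_subset_Icc_self.trans Icc_subset_uIcc) hs)) ζ hζ
  have hd0 : ∀ t ∈ Icc 0 T, d t = 0 := by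
    refine eq_zero_of_le_mul_integral (K := ξ * L) hd
      (fun t _ => intervalIntegral.integral_nonneg hξ fun _ _ => abs_nonneg _) fun t ht => ?_
    calc d t ≤ ∫ _ in 0..ξ, L * ∫ s in 0..t, d s := by
          rw [intervalIntegral.integral_of_le hξ]
          exact (intervalIntegral.integral_of_le hξ).trans_le <| integral_mono_ae
            (habs.intervalIntegrable hξ ht).1 (integrable_const _) (hpt.mono fun ζ hζ => hζ t ht)
      _ = ξ * L * ∫ s in 0..t, d s := by
          rw [intervalIntegral.integral_const, smul_eq_mul, sub_zero, mul_assoc]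
  filter_upwards [hpt] with ζ hζ t ht
  have hzero : ∫ s in 0..t, d s = 0 := by
    rw [intervalIntegral.integral_congr (g := fun _ => 0) fun s hs => hd0 s
      (uIcc_of_le ht.1 ▸ Icc_subset_Icc_right ht.2 <| hs), intervalIntegral.integral_zero]
  simpa only [hzero, mul_zero, abs_nonpos_iff, sub_eq_zero] using hζ t ht

end IsBoundedCaratheodory

end Gronwall

/-- A conservative solution `u` of `u_t + c(u) u_x = ∫₀^x g(u) u_x² dy` with energy measures `μ`
and initial data `(ubar, μbar)`, in the form needed for uniqueness. The derivative `u_x` enters only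
through `sq_sub_le`, which says that `u_x² dx` is dominated by `μ t`, and the equation itself only
along the energy quantiles. -/
structure IsEnergySol (c g ubar : ℝ → ℝ) (μbar : Measure ℝ) (u : ℝ → ℝ → ℝ)
    (μ : ℝ → Measure ℝ) : Prop where
  transport : IsTransportSol (fun t x => c (u t x)) μ
  continuousOn : ContinuousOn (Function.uncurry u) (Ici 0 ×ˢ Ici 0)
  boundary : ∀ t, 0 ≤ t → u t 0 = 0
  sq_sub_le : ∀ t a b, 0 ≤ t → 0 ≤ a → a ≤ b →
    (u t b - u t a) ^ 2 ≤ (b - a) * (μ t).real (Ioc a b)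
  initial : ∀ x, 0 ≤ x → u 0 x = ubar x
  measure_zero : μ 0 = μbar
  characteristic : ∀ᵐ ξ ∂(volume.restrict (Icc 0 (μbar univ).toReal)), ∀ t, 0 ≤ t →
    u t (quantile μ t ξ) =
      u 0 (quantile μ 0 ξ) + ∫ s in 0..t, ∫ η in 0..ξ, g (u s (quantile μ s η))

namespace IsEnergySol

variable {c g ubar : ℝ → ℝ} {μbar : Measure ℝ} {u : ℝ → ℝ → ℝ} {μ : ℝ → Measure ℝ}
  {C s t x ζ ξ T : ℝ}

theorem continuousOn_slice (h : IsEnergySol c g ubar μbar u μ) (ht : 0 ≤ t) :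
    ContinuousOn (u t) (Ici 0) :=
  h.continuousOn.comp (f := fun x => (t, x)) (by fun_prop) fun _ hx => ⟨ht, hx⟩

theorem sq_quantile_le (h : IsEnergySol c g ubar μbar u μ) (ht : 0 ≤ t) (hξ : 0 < ξ)
    (hξt : AttainsMass (μ t) ξ) : u t (quantile μ t ξ) ^ 2 ≤ quantile μ t ξ * ξ := by
  set q := quantile μ t ξ
  have hq : 0 ≤ q := quantile_nonneg μ t ξ
  rcases hq.eq_or_lt with hq0 | hq0
  · rw [← hq0, h.boundary t ht, zero_pow two_ne_zero, zero_mul]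
  have hbelow : ∀ x ∈ Ico 0 q, u t x ^ 2 ≤ x * ξ := fun x hx => by
    have hmass : (μ t).real (Ioc 0 x) ≤ ξ := ENNReal.toReal_le_of_le_ofReal hξ.le <|
      (measure_mono Ioc_subset_Iic_self).trans
        (not_le.1 ((h.transport.quantile_le_iff ht hξ hξt).not.1 hx.2.not_ge)).le
    calc u t x ^ 2 = (u t x - u t 0) ^ 2 := by rw [h.boundary t ht, sub_zero]
      _ ≤ (x - 0) * (μ t).real (Ioc 0 x) := h.sq_sub_le t 0 x ht le_rfl hx.1
      _ ≤ x * ξ := by rw [sub_zero]; exact mul_le_mul_of_nonneg_left hmass hx.1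
  have hmem : q ∈ closure (Ico 0 q) := by rw [closure_Ico hq0.ne]; exact ⟨hq, le_rfl⟩
  exact ((((h.continuousOn_slice ht) q hq).mono fun _ hx => hx.1).pow 2).closure_le hmem
    (continuousWithinAt_id.mul_const ξ) hbelow

theorem attainsMass_of_attainsMass (h : IsEnergySol c g ubar μbar u μ)
    (hc : ∀ w, |c w| ≤ C * (1 + w ^ 2)) (hξ : 0 < ξ) (hs : 0 ≤ s) (hξs : AttainsMass (μ s) ξ)
    (ht : 0 ≤ t) : AttainsMass (μ t) ξ := by
  have hC : 0 ≤ C := by simpa using (abs_nonneg _).trans (hc 0)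
  refine h.transport.attainsMass_of_abs_speed_le (K := C * (1 + ξ)) hξ (fun r hr hξr => ?_) hs
    hξs ht
  have hq : 0 ≤ quantile μ r ξ := quantile_nonneg μ r ξ
  calc |c (u r (quantile μ r ξ))| ≤ C * (1 + u r (quantile μ r ξ) ^ 2) := hc _
    _ ≤ C * (1 + quantile μ r ξ * ξ) := by gcongr; exact h.sq_quantile_le hr hξ hξr
    _ ≤ C * (1 + ξ) * (1 + quantile μ r ξ) := by
      rw [mul_assoc]; gcongr; nlinarith

theorem measure_univ_le (h : IsEnergySol c g ubar μbar u μ) (hc : ∀ w, |c w| ≤ C * (1 + w ^ 2))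
    (hs : 0 ≤ s) (ht : 0 ≤ t) : μ s univ ≤ μ t univ := by
  refine ENNReal.le_of_forall_nnreal_lt fun ξ hξ => ?_
  rcases eq_zero_or_pos ξ with rfl | hξ0
  · exact zero_le
  rw [← ENNReal.ofReal_coe_nnreal] at hξ ⊢
  exact (h.attainsMass_of_attainsMass hc hξ0 hs (attainsMass_of_lt_measure_univ hξ)
    ht).ofReal_le_measure_univ

theorem measure_univ_eq (h : IsEnergySol c g ubar μbar u μ) (hc : ∀ w, |c w| ≤ C * (1 + w ^ 2))
    (ht : 0 ≤ t) : μ t univ = μbar univ :=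
  h.measure_zero ▸ (h.measure_univ_le hc ht le_rfl).antisymm (h.measure_univ_le hc le_rfl ht)

theorem measureReal_Iic_le (h : IsEnergySol c g ubar μbar u μ)
    (hc : ∀ w, |c w| ≤ C * (1 + w ^ 2)) (ht : 0 ≤ t) (x : ℝ) :
    (μ t).real (Iic x) ≤ (μbar univ).toReal := by
  have := h.transport.isFiniteMeasure ht
  rw [← h.measure_univ_eq hc ht]
  exact measureReal_mono (subset_univ _)

theorem attainsMass (h : IsEnergySol c g ubar μbar u μ) (hc : ∀ w, |c w| ≤ C * (1 + w ^ 2))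
    (ht : 0 ≤ t) (hξ : 0 ≤ ξ) (hξM : ξ < (μbar univ).toReal) : AttainsMass (μ t) ξ := by
  have := h.transport.isFiniteMeasure ht
  refine attainsMass_of_lt_measure_univ ?_
  rwa [ENNReal.ofReal_lt_iff_lt_toReal hξ (measure_ne_top _ _), h.measure_univ_eq hc ht]

theorem continuousOn_quantile (h : IsEnergySol c g ubar μbar u μ)
    (hc : ∀ w, |c w| ≤ C * (1 + w ^ 2)) (hξ : 0 < ξ) (hξM : ξ < (μbar univ).toReal) :
    ContinuousOn (fun t => quantile μ t ξ) (Ici 0) := fun _ ht =>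
  (h.transport.hasDerivWithinAt_quantile ht hξ (h.attainsMass hc ht hξ.le hξM)).continuousWithinAt

theorem monotoneOn_quantile (h : IsEnergySol c g ubar μbar u μ)
    (hc : ∀ w, |c w| ≤ C * (1 + w ^ 2)) (ht : 0 ≤ t) (hξM : ξ < (μbar univ).toReal) :
    MonotoneOn (quantile μ t) (Ioc 0 ξ) := fun _ ha _ hb hab =>
  have := h.transport.isFiniteMeasure ht
  quantile_mono (h.transport.measure_Iio t ht) ha.1 hab
    (h.attainsMass hc ht hb.1.le (hb.2.trans_lt hξM))

theorem isBoundedCaratheodory (h : IsEnergySol c g ubar μbar u μ)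
    (hc : ∀ w, |c w| ≤ C * (1 + w ^ 2)) (hξ : 0 < ξ) (hξM : ξ < (μbar univ).toReal) (T : ℝ) :
    IsBoundedCaratheodory T ξ (fun s η => u s (quantile μ s η)) where
  aestronglyMeasurable s hs := by
    have hq : AEMeasurable (quantile μ s) (volume.restrict (Ioc 0 ξ)) :=
      aemeasurable_restrict_of_monotoneOn measurableSet_Ioc (h.monotoneOn_quantile hc hs.1 hξM)
    have hu : Continuous fun x => u s (max 0 x) :=
      (h.continuousOn_slice hs.1).comp_continuous (by fun_prop) fun x => le_max_left 0 x
    refine (hu.comp_aestronglyMeasurable hq.aestronglyMeasurable).congr (.of_forall fun η => ?_)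
    simp only [max_eq_right (quantile_nonneg μ s η)]
  exists_bound := by
    obtain ⟨R, hR⟩ := isCompact_Icc.exists_bound_of_continuousOn
      ((h.continuousOn_quantile hc hξ hξM).mono (Icc_subset_Ici_self : Icc 0 T ⊆ Ici 0))
    obtain ⟨B, hB⟩ := (isCompact_Icc.prod isCompact_Icc).exists_bound_of_continuousOn
      (h.continuousOn.mono <| prod_mono (Icc_subset_Ici_self : Icc 0 T ⊆ Ici 0)
        (Icc_subset_Ici_self : Icc 0 R ⊆ Ici 0))
    refine ⟨B, fun s hs η hη => hB (s, quantile μ s η) ⟨hs, quantile_nonneg μ s η, ?_⟩⟩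
    calc quantile μ s η ≤ quantile μ s ξ :=
          h.monotoneOn_quantile hc hs.1 hξM hη (right_mem_Ioc.2 hξ) hη.2
      _ ≤ R := (le_abs_self _).trans (hR s hs)
  continuousOn η hη :=
    h.continuousOn.comp (continuousOn_id.prodMk <|
      (h.continuousOn_quantile hc hη.1 (hη.2.trans_lt hξM)).mono Icc_subset_Ici_self)
      fun s hs => ⟨hs.1, quantile_nonneg μ s η⟩

section Uniqueness

variable {u₁ u₂ : ℝ → ℝ → ℝ} {μ₁ μ₂ : ℝ → Measure ℝ}

theorem ae_value_quantile_eq (h₁ : IsEnergySol c g ubar μbar u₁ μ₁)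
    (h₂ : IsEnergySol c g ubar μbar u₂ μ₂) (hc : ∀ w, |c w| ≤ C * (1 + w ^ 2))
    (hg : LocallyLipschitz g) (hξ : 0 < ξ) (hξM : ξ < (μbar univ).toReal) (T : ℝ) :
    ∀ᵐ ζ ∂(volume.restrict (Ioc 0 ξ)), ∀ t ∈ Icc 0 T,
      u₁ t (quantile μ₁ t ζ) = u₂ t (quantile μ₂ t ζ) := by
  have hsub : Ioc 0 ξ ⊆ Icc 0 (μbar univ).toReal := fun x hx => ⟨hx.1.le, hx.2.trans hξM.le⟩
  have hstart : ∀ ζ, u₂ 0 (quantile μ₂ 0 ζ) = u₁ 0 (quantile μ₁ 0 ζ) := fun ζ => by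
    rw [quantile_congr (h₁.measure_zero.trans h₂.measure_zero.symm),
      h₁.initial _ (quantile_nonneg _ _ _), h₂.initial _ (quantile_nonneg _ _ _)]
  refine (h₁.isBoundedCaratheodory hc hξ hξM T).ae_eq_of_integral_eq
    (U₀ := fun ζ => u₁ 0 (quantile μ₁ 0 ζ)) hξ.le (h₂.isBoundedCaratheodory hc hξ hξM T) hg ?_ ?_
  · filter_upwards [ae_restrict_of_ae_restrict_of_subset hsub h₁.characteristic] with ζ hζ t ht
    exact hζ t ht.1
  · filter_upwards [ae_restrict_of_ae_restrict_of_subset hsub h₂.characteristic] with ζ hζ t ht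
    rw [hζ t ht.1, hstart]

theorem quantile_eq_of_value_eq (h₁ : IsEnergySol c g ubar μbar u₁ μ₁)
    (h₂ : IsEnergySol c g ubar μbar u₂ μ₂) (hc : ∀ w, |c w| ≤ C * (1 + w ^ 2)) (hζ : 0 < ζ)
    (hζM : ζ < (μbar univ).toReal) (hT : 0 ≤ T)
    (hval : ∀ t ∈ Icc 0 T, u₁ t (quantile μ₁ t ζ) = u₂ t (quantile μ₂ t ζ)) :
    quantile μ₁ T ζ = quantile μ₂ T ζ := by
  have hderiv : ∀ t ∈ Icc 0 T,
      HasDerivWithinAt (fun t => quantile μ₁ t ζ - quantile μ₂ t ζ) 0 (Ici 0) t := fun t ht => by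
    have := (h₁.transport.hasDerivWithinAt_quantile ht.1 hζ (h₁.attainsMass hc ht.1 hζ.le hζM)).sub
      (h₂.transport.hasDerivWithinAt_quantile ht.1 hζ (h₂.attainsMass hc ht.1 hζ.le hζM))
    rwa [hval t ht, sub_self] at this
  have hconst := constant_of_has_deriv_right_zero
    (fun t ht => (hderiv t ht).continuousWithinAt.mono Icc_subset_Ici_self)
    (fun t ht => (hderiv t (Ico_subset_Icc_self ht)).mono (Ici_subset_Ici.2 ht.1))
    T ⟨hT, le_rfl⟩
  rwa [quantile_congr (h₁.measure_zero.trans h₂.measure_zero.symm), sub_self, sub_eq_zero] at hconst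

theorem exists_quantile_eq (h₁ : IsEnergySol c g ubar μbar u₁ μ₁)
    (h₂ : IsEnergySol c g ubar μbar u₂ μ₂) (hc : ∀ w, |c w| ≤ C * (1 + w ^ 2))
    (hg : LocallyLipschitz g) (ht : 0 ≤ t) {a b : ℝ} (ha : 0 ≤ a) (hab : a < b)
    (hbM : b ≤ (μbar univ).toReal) :
    ∃ ζ ∈ Ioo a b, quantile μ₁ t ζ = quantile μ₂ t ζ ∧
      u₁ t (quantile μ₁ t ζ) = u₂ t (quantile μ₂ t ζ) := by
  obtain ⟨ξ, haξ, hξb⟩ := exists_between hab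
  have hξM : ξ < (μbar univ).toReal := hξb.trans_le hbM
  have hae := ae_restrict_of_ae_restrict_of_subset
    (show Ioo a ξ ⊆ Ioc 0 ξ from fun x hx => ⟨ha.trans_lt hx.1, hx.2.le⟩)
    (h₁.ae_value_quantile_eq h₂ hc hg (ha.trans_lt haξ) hξM t)
  have : (ae (volume.restrict (Ioo a ξ))).NeBot := by
    rwa [ae_neBot, Ne, Measure.restrict_eq_zero, volume_Ioo, ENNReal.ofReal_eq_zero, not_le,
      sub_pos]
  obtain ⟨ζ, hval, hζ⟩ := (hae.and (ae_restrict_mem measurableSet_Ioo)).exists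
  exact ⟨ζ, ⟨hζ.1, hζ.2.trans hξb⟩, h₁.quantile_eq_of_value_eq h₂ hc (ha.trans_lt hζ.1)
    (hζ.2.trans hξM) ht hval, hval t ⟨ht, le_rfl⟩⟩

theorem measureReal_Iic_le_measureReal_Iic (h₁ : IsEnergySol c g ubar μbar u₁ μ₁)
    (h₂ : IsEnergySol c g ubar μbar u₂ μ₂) (hc : ∀ w, |c w| ≤ C * (1 + w ^ 2))
    (hg : LocallyLipschitz g) (ht : 0 ≤ t) (x : ℝ) : (μ₁ t).real (Iic x) ≤ (μ₂ t).real (Iic x) := by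
  have := h₁.transport.isFiniteMeasure ht
  have := h₂.transport.isFiniteMeasure ht
  by_contra! hlt
  have hM := h₁.measureReal_Iic_le hc ht x
  obtain ⟨ζ, ⟨hζ₂, hζ₁⟩, hq, -⟩ := h₁.exists_quantile_eq h₂ hc hg ht measureReal_nonneg hlt hM
  have hζ : 0 < ζ := measureReal_nonneg.trans_lt hζ₂
  have hx : quantile μ₁ t ζ ≤ x :=
    (h₁.transport.quantile_le_iff ht hζ (h₁.attainsMass hc ht hζ.le (hζ₁.trans_le hM))).2 <|
      (ENNReal.ofReal_le_iff_le_toReal (measure_ne_top _ _)).2 hζ₁.le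
  rw [hq, h₂.transport.quantile_le_iff ht hζ (h₂.attainsMass hc ht hζ.le (hζ₁.trans_le hM)),
    ENNReal.ofReal_le_iff_le_toReal (measure_ne_top _ _)] at hx
  exact hζ₂.not_ge hx

theorem measure_eq (h₁ : IsEnergySol c g ubar μbar u₁ μ₁) (h₂ : IsEnergySol c g ubar μbar u₂ μ₂)
    (hc : ∀ w, |c w| ≤ C * (1 + w ^ 2)) (hg : LocallyLipschitz g) (ht : 0 ≤ t) :
    μ₁ t = μ₂ t := by
  have := h₁.transport.isFiniteMeasure ht
  have := h₂.transport.isFiniteMeasure ht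
  refine Measure.ext_of_Iic _ _ fun x => ?_
  rw [← measureReal_eq_measureReal_iff]
  exact (h₁.measureReal_Iic_le_measureReal_Iic h₂ hc hg ht x).antisymm
    (h₂.measureReal_Iic_le_measureReal_Iic h₁ hc hg ht x)

theorem exists_value_eq (h₁ : IsEnergySol c g ubar μbar u₁ μ₁)
    (h₂ : IsEnergySol c g ubar μbar u₂ μ₂) (hc : ∀ w, |c w| ≤ C * (1 + w ^ 2))
    (hg : LocallyLipschitz g) (ht : 0 ≤ t) (hx : 0 ≤ x) {ε : ℝ} (hε : 0 < ε) :
    ∃ y ∈ Icc 0 x, u₁ t y = u₂ t y ∧ (μ₁ t).real (Ioc y x) ≤ ε := by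
  have := h₁.transport.isFiniteMeasure ht
  set m := (μ₁ t).real (Iic x)
  rcases (measureReal_nonneg : 0 ≤ m).eq_or_lt with hm | hm
  · refine ⟨0, ⟨le_rfl, hx⟩, by rw [h₁.boundary t ht, h₂.boundary t ht], ?_⟩
    exact (measureReal_mono Ioc_subset_Iic_self).trans (hm.symm.trans_le hε.le)
  have hmM : m ≤ (μbar univ).toReal := h₁.measureReal_Iic_le hc ht x
  obtain ⟨ζ, ⟨haζ, hζm⟩, hq, hval⟩ := h₁.exists_quantile_eq h₂ hc hg ht (le_max_left 0 (m - ε))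
    (max_lt hm (by linarith)) hmM
  obtain ⟨hζ, hζε⟩ := max_lt_iff.1 haζ
  have hgalois := fun {z} => h₁.transport.quantile_le_iff (x := z) ht hζ
    (h₁.attainsMass hc ht hζ.le (hζm.trans_le hmM))
  simp only [ENNReal.ofReal_le_iff_le_toReal (measure_ne_top _ _)] at hgalois
  have hyx : quantile μ₁ t ζ ≤ x := hgalois.2 hζm.le
  refine ⟨quantile μ₁ t ζ, ⟨quantile_nonneg _ _ _, hyx⟩, hval.trans (by rw [hq]), ?_⟩
  have hζy : ζ ≤ (μ₁ t).real (Iic (quantile μ₁ t ζ)) := hgalois.1 le_rfl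
  have hsplit :
      m = (μ₁ t).real (Iic (quantile μ₁ t ζ)) + (μ₁ t).real (Ioc (quantile μ₁ t ζ) x) := by
    rw [← measureReal_union (Iic_disjoint_Ioc le_rfl) measurableSet_Ioc, Iic_union_Ioc_eq_Iic hyx]
  linarith

theorem value_eq (h₁ : IsEnergySol c g ubar μbar u₁ μ₁) (h₂ : IsEnergySol c g ubar μbar u₂ μ₂)
    (hc : ∀ w, |c w| ≤ C * (1 + w ^ 2)) (hg : LocallyLipschitz g) (ht : 0 ≤ t) (hx : 0 ≤ x) :
    u₁ t x = u₂ t x := by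
  have hclose : ∀ ε > 0, (u₁ t x - u₂ t x) ^ 2 ≤ ε * (4 * x) := fun ε hε => by
    obtain ⟨y, hy, hval, hmass⟩ := h₁.exists_value_eq h₂ hc hg ht hx hε
    have hosc : (x - y) * (μ₁ t).real (Ioc y x) ≤ x * ε :=
      mul_le_mul (by linarith [hy.1]) hmass measureReal_nonneg hx
    have hosc₁ := h₁.sq_sub_le t y x ht hy.1 hy.2
    have hosc₂ := h₂.sq_sub_le t y x ht hy.1 hy.2
    rw [← hval, ← h₁.measure_eq h₂ hc hg ht] at hosc₂
    calc (u₁ t x - u₂ t x) ^ 2 = ((u₁ t x - u₁ t y) - (u₂ t x - u₁ t y)) ^ 2 := by ring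
      _ ≤ 2 * (u₁ t x - u₁ t y) ^ 2 + 2 * (u₂ t x - u₁ t y) ^ 2 := by
        linarith [sq_nonneg ((u₁ t x - u₁ t y) + (u₂ t x - u₁ t y))]
      _ ≤ ε * (4 * x) := by linarith
  have hlim : Tendsto (fun ε => ε * (4 * x)) (𝓝[>] 0) (𝓝 0) :=
    ((continuous_mul_const (4 * x)).tendsto' _ _ (zero_mul _)).mono_left nhdsWithin_le_nhds
  have hsq : (u₁ t x - u₂ t x) ^ 2 ≤ 0 := ge_of_tendsto hlim (eventually_mem_nhdsWithin.mono hclose)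
  exact sub_eq_zero.1 ((pow_eq_zero_iff two_ne_zero).1 (hsq.antisymm (sq_nonneg _)))

end Uniqueness

end IsEnergySol

namespace ConsSol

variable {f ubar : ℝ → ℝ} {μbar : Measure ℝ} {u ux : ℝ → ℝ → ℝ} {μ : ℝ → Measure ℝ}

theorem continuousOn (h : ConsSol f ubar μbar u ux μ) :
    ContinuousOn (Function.uncurry u) (Ici 0 ×ˢ Ici 0) := by
  rintro ⟨t, x⟩ htx
  obtain ⟨C, α, -, hα, -, hhölder⟩ := h.1 (Metric.ball (t, x) 1) Metric.isBounded_ball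
  have hlim : Tendsto (fun p : ℝ × ℝ => C * (|p.1 - t| + |p.2 - x|) ^ α)
      (𝓝[Ici 0 ×ˢ Ici 0] (t, x)) (𝓝 0) := by
    have hcont : Continuous fun p : ℝ × ℝ => C * (|p.1 - t| + |p.2 - x|) ^ α :=
      continuous_const.mul (Continuous.rpow_const (by fun_prop) fun _ => Or.inr hα.le)
    exact (hcont.tendsto' _ _ (by simp [hα.ne'])).mono_left nhdsWithin_le_nhds
  rw [ContinuousWithinAt, tendsto_iff_dist_tendsto_zero]
  refine squeeze_zero' (.of_forall fun _ => dist_nonneg) ?_ hlim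
  filter_upwards [self_mem_nhdsWithin,
    mem_nhdsWithin_of_mem_nhds (Metric.ball_mem_nhds (t, x) one_pos)] with p hp hball
  exact hhölder _ _ _ _ hball (Metric.mem_ball_self one_pos) hp.1 hp.2 htx.1 htx.2

theorem setIntegral_sq_le (h : ConsSol f ubar μbar u ux μ) {t : ℝ} (ht : 0 ≤ t) {s : Set ℝ}
    (hs : s ⊆ Ici 0) : ∫ x in s, ux t x ^ 2 ≤ (μ t).real s := by
  obtain ⟨-, -, -, hux, -, -, hμ, -, -⟩ := h
  have hint : IntegrableOn (fun x => ux t x ^ 2) s := (hux t ht).2.mono_set hs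
  rw [integral_eq_lintegral_of_nonneg_ae (.of_forall fun x => sq_nonneg _)
    hint.aestronglyMeasurable]
  refine ENNReal.toReal_mono (measure_ne_top_of_subset (subset_univ s) (hμ t ht).1.ne) ?_
  calc ∫⁻ x in s, ENNReal.ofReal (ux t x ^ 2) = ∫⁻ x in s, (μ t).rnDeriv volume x :=
        lintegral_congr_ae <| (ae_restrict_of_ae_restrict_of_subset hs (hμ t ht).2.2).mono
          fun _ hx => hx.symm
    _ ≤ μ t s := Measure.setLIntegral_rnDeriv_le _

theorem sq_sub_le (h : ConsSol f ubar μbar u ux μ) {t a b : ℝ} (ht : 0 ≤ t) (ha : 0 ≤ a)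
    (hab : a ≤ b) : (u t b - u t a) ^ 2 ≤ (b - a) * (μ t).real (Ioc a b) := by
  have hsub : Ioc a b ⊆ Ici 0 := fun x hx => ha.trans hx.1.le
  obtain ⟨hux, hux_sq⟩ := h.2.2.2.1 t ht
  obtain ⟨hinta, hua⟩ := hux a ha
  obtain ⟨hintb, hub⟩ := hux b (ha.trans hab)
  have hmem : MemLp (ux t) 2 (volume.restrict (Ioc a b)) :=
    (memLp_two_iff_integrable_sq (hinta.symm.trans hintb).1.aestronglyMeasurable).2
      (hux_sq.mono_set hsub)
  calc (u t b - u t a) ^ 2 = (∫ x in Ioc a b, ux t x) ^ 2 := by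
        rw [hua, hub, intervalIntegral.integral_interval_sub_left hintb hinta,
          intervalIntegral.integral_of_le hab]
    _ ≤ (b - a) * ∫ x in Ioc a b, ux t x ^ 2 := by
      simpa [hab] using sq_integral_le_measureReal_mul_integral_sq hmem
    _ ≤ (b - a) * (μ t).real (Ioc a b) := by
      gcongr
      exact h.setIntegral_sq_le ht hsub

theorem isEnergySol (hf : ContDiff ℝ 2 f) (h : ConsSol f ubar μbar u ux μ) :
    IsEnergySol (deriv f) (fun w => 1 / 2 * deriv (deriv f) w) ubar μbar u μ := by
  have hcont := h.continuousOn
  have hsq := fun t a b => h.sq_sub_le (t := t) (a := a) (b := b)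
  obtain ⟨-, hinitial, hboundary, -, -, hzero, hμ, hweak, hchar⟩ := h
  exact
    { transport :=
        { measure_univ_lt_top := fun t ht => (hμ t ht).1
          measure_Iio := fun t ht => (hμ t ht).2.1
          weak_form := hweak
          continuousOn_speed := (hf.continuous_deriv one_le_two).comp_continuousOn hcont }
      continuousOn := hcont
      boundary := hboundary
      sq_sub_le := hsq
      initial := hinitial
      measure_zero := hzero
      characteristic := by simpa only [intervalIntegral.integral_const_mul] using hchar }

end ConsSol

theorem stmt19_general {c g ubar : ℝ → ℝ} {μbar : Measure ℝ} {u₁ u₂ : ℝ → ℝ → ℝ}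
    {μ₁ μ₂ : ℝ → Measure ℝ} {C : ℝ} (hc : ∀ w, |c w| ≤ C * (1 + w ^ 2)) (hg : LocallyLipschitz g)
    (h₁ : IsEnergySol c g ubar μbar u₁ μ₁) (h₂ : IsEnergySol c g ubar μbar u₂ μ₂) :
    (∀ t x : ℝ, 0 ≤ t → 0 ≤ x → u₁ t x = u₂ t x) ∧ ∀ t : ℝ, 0 ≤ t → μ₁ t = μ₂ t :=
  ⟨fun _ _ ht hx => h₁.value_eq h₂ hc hg ht hx, fun _ ht => h₁.measure_eq h₂ hc hg ht⟩

/-- Uniqueness of conservative solutions (Theorem 4.1 of the paper): two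
conservative solutions with the same data `(ū, μ̄)`, both satisfying conditions
(a), (b), (c), coincide: `u¹ = u²` on the quarter plane and `μ¹_{(t)} = μ²_{(t)}`
for all `t ≥ 0`. -/
theorem stmt19 (f : ℝ → ℝ) (hf : ContDiff ℝ 2 f) (hf0 : 0 ≤ deriv f 0)
    (L : NNReal) (hfLip : LipschitzWith L (deriv (deriv f)))
    (ubar ubar' : ℝ → ℝ)
    (hubar0 : ubar 0 = 0)
    (hubar'loc : ∀ x : ℝ, 0 ≤ x → IntervalIntegrable ubar' volume 0 x)
    (hubar : ∀ x : ℝ, 0 ≤ x → ubar x = ∫ y in (0:ℝ)..x, ubar' y)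
    (hubar'L2 : IntegrableOn (fun x => (ubar' x) ^ 2) (Set.Ici 0))
    (μbar : Measure ℝ) [IsFiniteMeasure μbar]
    (hμbarsupp : μbar (Set.Iio 0) = 0)
    (hμbarac : ∀ᵐ x ∂(volume.restrict (Set.Ici 0)),
      μbar.rnDeriv volume x = ENNReal.ofReal ((ubar' x) ^ 2))
    (u₁ ux₁ u₂ ux₂ : ℝ → ℝ → ℝ) (μ₁ μ₂ : ℝ → Measure ℝ)
    (h₁ : ConsSol f ubar μbar u₁ ux₁ μ₁)
    (h₂ : ConsSol f ubar μbar u₂ ux₂ μ₂) :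
    (∀ t x : ℝ, 0 ≤ t → 0 ≤ x → u₁ t x = u₂ t x) ∧
    (∀ t : ℝ, 0 ≤ t → μ₁ t = μ₂ t) := by
  obtain ⟨C, hC⟩ := exists_abs_le_mul_one_add_sq hf.differentiable_deriv_two hfLip
  exact stmt19_general hC ((lipschitzWith_smul (1 / 2 : ℝ)).comp hfLip).locallyLipschitz
    (h₁.isEnergySol hf) (h₂.isEnergySol hf)
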